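/- Three-term theta function identity: for all s, t, u, v ∈ ℂ, [s+t][s−t][u+v][u−v] = [u+s][u−s][v+t][v−t] − [u+t][u−t][v+s][v−s]. -/

import Mathlib

noncomputable section

open Complex Finset

namespace Ell

/-- `x^s = exp(-iπ s /(r τ))`. -/
def xp (τ : ℂ) (r : ℝ) (s : ℂ) : ℂ :=
  Complex.exp (-Complex.I * (Real.pi : ℂ) * s / ((r : ℂ) * τ))

/-- `Θ_p(z) = ∏_{j ≥ 0} (1 - z p^j)(1 - p^{j+1}/z)(1 - p^{j+1})`. -/
def Theta (p z : ℂ) : ℂ :=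
  ∏' j : ℕ, ((1 - z * p ^ j) * (1 - p ^ (j + 1) / z) * (1 - p ^ (j + 1)))

/-- The bracket `[u] = x^{u²/r - u} Θ_p(x^{2u})` with `p = x^{2r}`. -/
def br (τ : ℂ) (r : ℝ) (u : ℂ) : ℂ :=
  xp τ r (u ^ 2 / (r : ℂ) - u) * Theta (xp τ r (2 * (r : ℂ))) (xp τ r (2 * u))

/-- Elliptic shifted factorial `[u]_n = ∏_{j=0}^{n-1} [u+j]`. -/
def brF (τ : ℂ) (r : ℝ) (u : ℂ) (n : ℕ) : ℂ :=
  ∏ j ∈ Finset.range n, br τ r (u + (j : ℂ))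

/-- Elliptic binomial coefficient `C_n^k(α,β,γ)`. -/
def Cnk (τ : ℂ) (r : ℝ) (k n : ℕ) (α β γ : ℂ) : ℂ :=
  brF τ r 1 k / (brF τ r 1 n * brF τ r 1 (k - n)) *
    (brF τ r (α - γ) n * brF τ r (α + γ + (k : ℂ) - (n : ℂ)) n *
      brF τ r (α - β) (k - n) * brF τ r (α + β + (n : ℂ)) (k - n)) /
    (brF τ r (β - γ + (n : ℂ) - (k : ℂ)) n * brF τ r (γ - β - (n : ℂ)) (k - n) *
      brF τ r (β + γ) k)

/-- The elliptic 6j-symbol `R_n^m(α,β,γ,δ;k)`. -/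
def Rnm (τ : ℂ) (r : ℝ) (k n m : ℕ) (α β γ δ : ℂ) : ℂ :=
  ∑ j ∈ Finset.range (min n m + 1),
    Cnk τ r n j α γ (β + (k : ℂ) - (n : ℂ)) * Cnk τ r (k - j) (m - j) β (γ + (j : ℂ)) δ

/-- Terminating very-well-poised elliptic hypergeometric sum with explicit
truncation `N`:  `Σ_{j=0}^N ([u₀+2j]/[u₀]) ([u₀]_j/[1]_j) ∏ᵢ [uᵢ]_j/[u₀+1-uᵢ]_j`. -/
def Vsum (τ : ℂ) (r : ℝ) (u₀ : ℂ) (us : List ℂ) (N : ℕ) : ℂ :=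
  ∑ j ∈ Finset.range (N + 1),
    br τ r (u₀ + 2 * (j : ℂ)) / br τ r u₀ * (brF τ r u₀ j / brF τ r 1 j) *
      (us.map fun ui => brF τ r ui j / brF τ r (u₀ + 1 - ui) j).prod

/-- "Every bracket appearing in a denominator of `C_n^k(·,β,γ)` is nonzero". -/
def CdenomNZ (τ : ℂ) (r : ℝ) (k n : ℕ) (β γ : ℂ) : Prop :=
  brF τ r 1 n ≠ 0 ∧ brF τ r 1 (k - n) ≠ 0 ∧
    brF τ r (β - γ + (n : ℂ) - (k : ℂ)) n ≠ 0 ∧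
    brF τ r (γ - β - (n : ℂ)) (k - n) ≠ 0 ∧ brF τ r (β + γ) k ≠ 0

/-- "Every bracket appearing in a denominator of `R_n^m(α,β,γ,δ;k)` is nonzero". -/
def RdenomNZ (τ : ℂ) (r : ℝ) (k n m : ℕ) (β γ δ : ℂ) : Prop :=
  ∀ j ≤ min n m,
    CdenomNZ τ r n j γ (β + (k : ℂ) - (n : ℂ)) ∧
      CdenomNZ τ r (k - j) (m - j) (γ + (j : ℂ)) δ

/-- Jacobi theta `ϑ₁(v|σ)`. -/
def th1 (v σ : ℂ) : ℂ :=
  2 * Complex.exp (2 * (Real.pi : ℂ) * Complex.I * σ / 8) *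
    (∏' n : ℕ, (1 - Complex.exp (2 * (Real.pi : ℂ) * Complex.I * σ) ^ (n + 1))) *
    Complex.sin ((Real.pi : ℂ) * v) *
    ∏' n : ℕ,
      (1 - 2 * Complex.exp (2 * (Real.pi : ℂ) * Complex.I * σ) ^ (n + 1) *
            Complex.cos (2 * (Real.pi : ℂ) * v) +
        Complex.exp (2 * (Real.pi : ℂ) * Complex.I * σ) ^ (2 * (n + 1)))

/-- Jacobi theta `ϑ₀(v|σ)`. -/
def th0 (v σ : ℂ) : ℂ :=
  -Complex.I * Complex.exp ((Real.pi : ℂ) * Complex.I * (v + σ / 4)) * th1 (v + σ / 2) σ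

/-- Jacobi theta `ϑ₂(v|σ)`. -/
def th2 (v σ : ℂ) : ℂ := th1 (v + 1 / 2) σ

/-- Jacobi theta `ϑ₃(v|σ)`. -/
def th3 (v σ : ℂ) : ℂ :=
  Complex.exp ((Real.pi : ℂ) * Complex.I * (v + σ / 4)) * th1 (v + (σ + 1) / 2) σ

/-- Intertwining vector component `ψ_ε(u)^a_b`, `ε ∈ {1, -1}`. -/
def psi (τ : ℂ) (r : ℝ) (u : ℂ) (ε : ℤ) (a b : ℤ) : ℂ :=
  if ε = 1 then th0 ((((a : ℂ) - (b : ℂ)) * u + (a : ℂ)) / (2 * (r : ℂ))) (τ / 2)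
  else th3 ((((a : ℂ) - (b : ℂ)) * u + (a : ℂ)) / (2 * (r : ℂ))) (τ / 2)

/-- The constant `C = x^{-r/4} e^{-iπ/4} τ^{1/2}`. -/
def Cc (τ : ℂ) (r : ℝ) : ℂ :=
  xp τ r (-(r : ℂ) / 4) * Complex.exp (-(Real.pi : ℂ) * Complex.I / 4) * τ ^ (1 / 2 : ℂ)

/-- Dual intertwining vector component `ψ*_ε(u)^a_b = -ε(a-b) C² ψ_{-ε}(u-1)^a_b/(2[b][u])`. -/
def psiStar (τ : ℂ) (r : ℝ) (u : ℂ) (ε : ℤ) (a b : ℤ) : ℂ :=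
  -(ε : ℂ) * ((a : ℂ) - (b : ℂ)) * Cc τ r ^ 2 * psi τ r (u - 1) (-ε) a b /
    (2 * br τ r (b : ℂ) * br τ r u)

/-- Sign attached to a boolean. -/
def sg (b : Bool) : ℤ := if b then 1 else -1

/-- Canonical path from `a`: up for `j ≤ n`, down afterwards. -/
def cpathZ (a n : ℤ) (j : ℕ) : ℤ := if (j : ℤ) ≤ n then a + j else a + 2 * n - j

/-- Admissibility: `a - b ∈ {-k, -k+2, …, k}`. -/
def adm (k : ℕ) (a b : ℤ) : Prop := (a - b).natAbs ≤ k ∧ (a - b - (k : ℤ)) % 2 = 0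

instance (k : ℕ) (a b : ℤ) : Decidable (adm k a b) := by unfold adm; infer_instance

/-- Fused intertwining vector component `ψ^{(k)}_μ(u)^a_b` (zero if `a,b` not admissible). -/
def psiF (τ : ℂ) (r : ℝ) (k : ℕ) (μ : ℤ) (u : ℂ) (a b : ℤ) : ℂ :=
  if adm k a b then
    ∑ ε ∈ Finset.univ.filter fun ε : Fin k → Bool => (∑ j, sg (ε j)) = μ,
      ∏ j : Fin k,
        psi τ r (u + (k : ℂ) - (((j : ℕ) + 1 : ℕ) : ℂ)) (sg (ε j))
          (cpathZ a (((k : ℤ) - (a - b)) / 2) (j : ℕ))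
          (cpathZ a (((k : ℤ) - (a - b)) / 2) ((j : ℕ) + 1))
  else 0

/-- Partial-sum path attached to a sign sequence `δ`, starting at `a`. -/
def spath (k : ℕ) (a : ℤ) (δ : Fin k → Bool) (j : ℕ) : ℤ :=
  a + ∑ i ∈ Finset.range j, if h : i < k then sg (δ ⟨i, h⟩) else 0

/-- Fused dual intertwining vector component `ψ*^{(k)}_μ(u)^b_a`
(sum over all admissible paths from `a` to `b`; zero if not admissible). -/
def psiStarF (τ : ℂ) (r : ℝ) (k : ℕ) (μ : ℤ) (u : ℂ) (b a : ℤ) : ℂ :=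
  if adm k a b then
    ∑ δ ∈ Finset.univ.filter fun δ : Fin k → Bool => (∑ j, sg (δ j)) = b - a,
      ∏ j : Fin k,
        psiStar τ r (u + (k : ℂ) - (((j : ℕ) + 1 : ℕ) : ℂ))
          (if ((j : ℕ) + 1 : ℤ) ≤ ((k : ℤ) + μ) / 2 then 1 else -1)
          (spath k a δ ((j : ℕ) + 1)) (spath k a δ (j : ℕ))
  else 0

/-- The `L`-matrix `L^{(k)}(a,b;c,d|u) = Σ_μ ψ*^{(k)}_μ(u)^d_c ψ^{(k)}_μ(u)^a_b`. -/
def Lk (τ : ℂ) (r : ℝ) (k : ℕ) (u : ℂ) (a b c d : ℤ) : ℂ :=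
  ∑ i ∈ Finset.range (k + 1),
    psiStarF τ r k ((k : ℤ) - 2 * (i : ℤ)) u d c * psiF τ r k ((k : ℤ) - 2 * (i : ℤ)) u a b

/-- Normalized face weight `W̄(a,b;d,c|u)` (arguments ordered (NW, NE; SW, SE)). -/
def Wb (τ : ℂ) (r : ℝ) (u : ℂ) (a b d c : ℤ) : ℂ :=
  if b = a + 1 ∧ d = a + 1 ∧ c = a + 2 then 1
  else if b = a - 1 ∧ d = a - 1 ∧ c = a - 2 then 1
  else if b = a + 1 ∧ d = a + 1 ∧ c = a then
    br τ r ((a : ℂ) - u) * br τ r 1 / (br τ r (a : ℂ) * br τ r (1 + u))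
  else if b = a - 1 ∧ d = a - 1 ∧ c = a then
    br τ r ((a : ℂ) + u) * br τ r 1 / (br τ r (a : ℂ) * br τ r (1 + u))
  else if b = a + 1 ∧ d = a - 1 ∧ c = a then
    br τ r ((a : ℂ) + 1) * br τ r u / (br τ r (a : ℂ) * br τ r (1 + u))
  else if b = a - 1 ∧ d = a + 1 ∧ c = a then
    br τ r ((a : ℂ) - 1) * br τ r u / (br τ r (a : ℂ) * br τ r (1 + u))
  else 0

/-- Sequence with prescribed endpoints `d`, `c` and free interior values `f`. -/
def seqI (k : ℕ) (d c : ℤ) (f : Fin (k - 1) → ℤ) (j : ℕ) : ℤ :=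
  if h0 : j = 0 then d
  else if hj : j < k then f ⟨j - 1, by omega⟩ else c

/-- Fused face weight `W^{(k,1)}(a,b;d,c|u)`. -/
def Wk1 (τ : ℂ) (r : ℝ) (k : ℕ) (u : ℂ) (a b d c : ℤ) : ℂ :=
  if adm k a b then
    ∑' f : Fin (k - 1) → ℤ,
      ∏ j ∈ Finset.range k,
        Wb τ r (u + (k : ℂ) - ((j : ℂ) + 1))
          (cpathZ a (((k : ℤ) - (a - b)) / 2) j)
          (cpathZ a (((k : ℤ) - (a - b)) / 2) (j + 1))
          (seqI k d c f j) (seqI k d c f (j + 1))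
  else 0

/-- Fused face weight `W^{(k,l)}(a,b;d,c|u)`. -/
def Wkl (τ : ℂ) (r : ℝ) (k l : ℕ) (u : ℂ) (a b d c : ℤ) : ℂ :=
  if adm l b c then
    ∑' g : Fin (l - 1) → ℤ,
      ∏ i ∈ Finset.range l,
        Wk1 τ r k (u - (l : ℂ) + ((i : ℂ) + 1))
          (seqI l a d g i) (cpathZ b (((l : ℤ) - (b - c)) / 2) i)
          (seqI l a d g (i + 1)) (cpathZ b (((l : ℤ) - (b - c)) / 2) (i + 1))
  else 0

/-- Eight-vertex weight `ā(u)`. -/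
def aw (τ : ℂ) (r : ℝ) (u : ℂ) : ℂ :=
  th2 (1 / (2 * (r : ℂ))) (τ / 2) * th2 (u / (2 * (r : ℂ))) (τ / 2) /
    (th2 0 (τ / 2) * th2 ((1 + u) / (2 * (r : ℂ))) (τ / 2))

/-- Eight-vertex weight `b̄(u)`. -/
def bw (τ : ℂ) (r : ℝ) (u : ℂ) : ℂ :=
  th2 (1 / (2 * (r : ℂ))) (τ / 2) * th1 (u / (2 * (r : ℂ))) (τ / 2) /
    (th2 0 (τ / 2) * th1 ((1 + u) / (2 * (r : ℂ))) (τ / 2))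

/-- Eight-vertex weight `c̄(u)`. -/
def cw (τ : ℂ) (r : ℝ) (u : ℂ) : ℂ :=
  th1 (1 / (2 * (r : ℂ))) (τ / 2) * th2 (u / (2 * (r : ℂ))) (τ / 2) /
    (th2 0 (τ / 2) * th1 ((1 + u) / (2 * (r : ℂ))) (τ / 2))

/-- Eight-vertex weight `d̄(u)`. -/
def dw (τ : ℂ) (r : ℝ) (u : ℂ) : ℂ :=
  -(th1 (1 / (2 * (r : ℂ))) (τ / 2) * th1 (u / (2 * (r : ℂ))) (τ / 2)) /
    (th2 0 (τ / 2) * th2 ((1 + u) / (2 * (r : ℂ))) (τ / 2))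

/-- The normalized eight-vertex `R`-matrix entry `R̄(u)_{(ε₁,ε₂),(ε₁',ε₂')}`. -/
def Rbar (τ : ℂ) (r : ℝ) (u : ℂ) (e1 e2 e1' e2' : ℤ) : ℂ :=
  if e1' = e1 ∧ e2' = e2 ∧ e1 = e2 then aw τ r u
  else if e1' = e1 ∧ e2' = e2 ∧ e1 = -e2 then bw τ r u
  else if e1' = e2 ∧ e2' = e1 ∧ e1 = -e2 then cw τ r u
  else if e1' = -e1 ∧ e2' = -e2 ∧ e1 = e2 then dw τ r u
  else 0

/-- Sklyanin standard-basis vector `v_+(z)`. -/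
def vp (τ z : ℂ) : ℂ := th3 (2 * z) (2 * τ) - th2 (2 * z) (2 * τ)

/-- Sklyanin standard-basis vector `v_-(z)`. -/
def vm (τ z : ℂ) : ℂ := th3 (2 * z) (2 * τ) + th2 (2 * z) (2 * τ)


/-- Finite `q`-factorial. -/
def Qf (p : ℂ) (n : ℕ) : ℂ := ∏ j ∈ Finset.range n, (1 - p ^ (j + 1))

/-- Reciprocal `q`-factorial on the integers. -/
def Rf (p : ℂ) (m : ℤ) : ℂ := if 0 ≤ m then (Qf p m.toNat)⁻¹ else 0

lemma one_sub_pow_ne {p : ℂ} (hp : ‖p‖ < 1) (n : ℕ) : 1 - p ^ (n + 1) ≠ 0 := by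
  intro h
  have h1 : p ^ (n + 1) = 1 := (sub_eq_zero.mp h).symm
  have h2 : ‖p‖ ^ (n + 1) = 1 := by rw [← norm_pow, h1, norm_one]
  have h3 : ‖p‖ ^ (n + 1) < 1 := pow_lt_one₀ (norm_nonneg _) hp (Nat.succ_ne_zero n)
  linarith

lemma Qf_ne {p : ℂ} (hp : ‖p‖ < 1) (n : ℕ) : Qf p n ≠ 0 :=
  Finset.prod_ne_zero_iff.mpr fun j _ => one_sub_pow_ne hp j

lemma Rf_rec {p : ℂ} (hp : ‖p‖ < 1) (m : ℤ) : Rf p (m - 1) = (1 - p ^ m) * Rf p m := by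
  rcases lt_trichotomy m 0 with h | h | h
  · simp [Rf, show ¬ (0 ≤ m) by omega, show ¬ (1 ≤ m) by omega]
  · subst h; simp [Rf]
  · obtain ⟨n, rfl⟩ : ∃ n : ℕ, m = n + 1 := ⟨(m - 1).toNat, by omega⟩
    have h1 := one_sub_pow_ne hp n
    have h2 := Qf_ne hp n
    have e1 : ((n : ℤ) + 1 - 1).toNat = n := by omega
    have e2 : ((n : ℤ) + 1).toNat = n + 1 := by omega
    have e3 : p ^ ((n : ℤ) + 1) = p ^ (n + 1) := by exact_mod_cast zpow_natCast p (n + 1)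
    rw [Rf, Rf, if_pos (by omega), if_pos (by omega), e1, e2, e3, Qf, Qf, Finset.prod_range_succ]
    rw [Qf] at h2
    field_simp

/-- Theta series coefficient. -/
def gf (σ : ℂ) (k : ℤ) : ℂ := Complex.exp (Real.pi * I * (k + σ * (k ^ 2 - k)))

lemma gf_succ (σ : ℂ) (k : ℤ) :
    gf σ (k + 1) = - (gf σ k * Complex.exp (2 * Real.pi * I * σ) ^ k) := by
  rw [← Complex.exp_int_mul, gf, gf, ← Complex.exp_add, ← neg_one_mul, ← Complex.exp_pi_mul_I,
    ← Complex.exp_add]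
  congr 1
  push_cast
  ring

/-- Coefficients of the finite triple product. -/
def cf (σ p : ℂ) (n : ℕ) (k : ℤ) : ℂ := gf σ k * Qf p (2 * n) * Rf p (n + k) * Rf p (n - k)

lemma cf_rec {σ p : ℂ} (hs : p = Complex.exp (2 * Real.pi * I * σ)) (hp : ‖p‖ < 1) (n : ℕ)
    (k : ℤ) : cf σ p (n + 1) k =
      (1 + p ^ (2 * n + 1)) * cf σ p n k - p ^ n * cf σ p n (k - 1)
        - p ^ (n + 1) * cf σ p n (k + 1) := by
  have hp0 : p ≠ 0 := hs ▸ Complex.exp_ne_zero _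
  have g1 : gf σ (k + 1) = - (gf σ k * p ^ k) := by rw [hs]; exact gf_succ σ k
  have g2 : gf σ k = - (gf σ (k - 1) * p ^ (k - 1)) := by
    have := gf_succ σ (k - 1)
    rw [hs]; simpa using this
  have hk := zpow_ne_zero k hp0
  have g3 : gf σ (k - 1) = - (gf σ k * p * (p ^ k)⁻¹) := by
    rw [g2, zpow_sub_one₀ hp0]; field_simp
  have hq : Qf p (2 * (n + 1)) = Qf p (2 * n) * (1 - p ^ (2 * n + 1)) * (1 - p ^ (2 * n + 2)) := by
    rw [show 2 * (n + 1) = 2 * n + 1 + 1 by ring, Qf, Finset.prod_range_succ,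
      Finset.prod_range_succ, Qf]
  have a1 := Rf_rec hp (n + 1 + k)
  have a2 := Rf_rec hp (n + k)
  have b1 := Rf_rec hp (n + 1 - k)
  have b2 := Rf_rec hp (n - k)
  rw [show (n : ℤ) + 1 + k - 1 = n + k by ring] at a1
  rw [show (n : ℤ) + 1 - k - 1 = n - k by ring] at b1
  simp only [cf]
  rw [show ((n + 1 : ℕ) : ℤ) + k = n + 1 + k by push_cast; ring,
    show ((n + 1 : ℕ) : ℤ) - k = n + 1 - k by push_cast; ring,
    show (n : ℤ) + (k - 1) = n + k - 1 by ring, show (n : ℤ) - (k - 1) = n + 1 - k by ring,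
    show (n : ℤ) + (k + 1) = n + 1 + k by ring, show (n : ℤ) - (k + 1) = n - k - 1 by ring,
    a2, b2, a1, b1, g1, g3, hq]
  simp only [zpow_add₀ hp0, zpow_sub₀ hp0, zpow_one, zpow_natCast]
  generalize p ^ k = y at *
  field_simp
  ring

lemma hasSum_finite {σ p z : ℂ} (hs : p = Complex.exp (2 * Real.pi * I * σ)) (hp : ‖p‖ < 1)
    (hz : z ≠ 0) (n : ℕ) : HasSum (fun k : ℤ => cf σ p n k * z ^ k)
      (∏ j ∈ Finset.range n, ((1 - z * p ^ j) * (1 - p ^ (j + 1) / z))) := by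
  induction n with
  | zero =>
    have := hasSum_single (f := fun k : ℤ => cf σ p 0 k * z ^ k) 0 (by
      intro k hk
      rcases lt_or_gt_of_ne hk with h | h
      · simp [cf, Rf, show ¬ (0 ≤ k) by omega]
      · simp [cf, Rf, show ¬ (k ≤ 0) by omega])
    simpa [cf, Rf, Qf, gf] using this
  | succ n ih =>
    rw [Finset.prod_range_succ]
    have h1 := (Equiv.subRight (1 : ℤ)).hasSum_iff.mpr ih
    have h2 := (Equiv.addRight (1 : ℤ)).hasSum_iff.mpr ih
    have h3 := ((ih.mul_left (1 + p ^ (2 * n + 1))).sub (h1.mul_left (p ^ n * z))).sub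
      (h2.mul_left (p ^ (n + 1) * z⁻¹))
    have hf : (fun k : ℤ => cf σ p (n + 1) k * z ^ k) = fun k : ℤ =>
        (1 + p ^ (2 * n + 1)) * (cf σ p n k * z ^ k)
          - p ^ n * z * ((fun k : ℤ => cf σ p n k * z ^ k) ∘ (Equiv.subRight (1 : ℤ))) k
          - p ^ (n + 1) * z⁻¹ * ((fun k : ℤ => cf σ p n k * z ^ k) ∘ (Equiv.addRight (1 : ℤ))) k := by
      funext k
      simp only [Function.comp, Equiv.subRight_apply, Equiv.coe_addRight]
      rw [cf_rec hs hp, zpow_sub_one₀ hz, zpow_add_one₀ hz]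
      field_simp
    rw [hf]
    have hv : ∀ P : ℂ, P * ((1 - z * p ^ n) * (1 - p ^ (n + 1) / z)) =
        (1 + p ^ (2 * n + 1)) * P - p ^ n * z * P - p ^ (n + 1) * z⁻¹ * P := by
      intro P
      field_simp
      ring
    rw [hv]
    exact h3

lemma Qf_tendsto {p : ℂ} (hp : ‖p‖ < 1) : ∃ q : ℂ, q ≠ 0 ∧
    Filter.Tendsto (Qf p) Filter.atTop (nhds q) := by
  refine ⟨∏' n : ℕ, (1 - p ^ (n + 1)), ?_,
    (ModularForm.multipliable_one_sub_pow hp).tendsto_prod_tprod_nat⟩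
  have := tprod_one_add_ne_zero_of_summable (f := fun n : ℕ ↦ -p ^ (n + 1))
    (fun n => by simpa [← sub_eq_add_neg] using one_sub_pow_ne hp n)
    (by
      have := (summable_nat_add_iff 1).mpr (summable_geometric_of_lt_one (norm_nonneg _) hp)
      simpa using this)
  simpa [← sub_eq_add_neg] using this

lemma Rf_tendsto {p : ℂ} (hp : ‖p‖ < 1) : ∃ q : ℂ,
    Filter.Tendsto (Rf p) Filter.atTop (nhds q) := by
  obtain ⟨q, hq, h⟩ := Qf_tendsto hp
  refine ⟨q⁻¹, ?_⟩
  have h2 : Filter.Tendsto (fun m : ℤ => (Qf p m.toNat)⁻¹) Filter.atTop (nhds q⁻¹) := by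
    refine (h.inv₀ hq).comp ?_
    exact Filter.tendsto_atTop.mpr fun b => by
      filter_upwards [Filter.eventually_ge_atTop (b : ℤ)] with m hm
      omega
  refine h2.congr' ?_
  filter_upwards [Filter.eventually_ge_atTop (0 : ℤ)] with m hm
  rw [Rf, if_pos hm]

lemma Qf_bdd {p : ℂ} (hp : ‖p‖ < 1) : ∃ M : ℝ, 0 ≤ M ∧ ∀ n, ‖Qf p n‖ ≤ M := by
  obtain ⟨q, hq, h⟩ := Qf_tendsto hp
  obtain ⟨M, hM⟩ := (Metric.isBounded_range_of_tendsto _ h).exists_norm_le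
  exact ⟨M, (norm_nonneg _).trans (hM _ ⟨0, rfl⟩), fun n => hM _ ⟨n, rfl⟩⟩

lemma Rf_bdd {p : ℂ} (hp : ‖p‖ < 1) : ∃ M : ℝ, 0 ≤ M ∧ ∀ n, ‖Rf p n‖ ≤ M := by
  obtain ⟨q, hq, h⟩ := Qf_tendsto hp
  obtain ⟨M, hM⟩ := (Metric.isBounded_range_of_tendsto _ (h.inv₀ hq)).exists_norm_le
  have h0 : 0 ≤ M := (norm_nonneg _).trans (hM _ ⟨0, rfl⟩)
  refine ⟨M, h0, fun n => ?_⟩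
  rw [Rf]
  split_ifs
  · exact hM _ ⟨n.toNat, rfl⟩
  · simpa using h0

lemma gf_term (σ w : ℂ) (k : ℤ) : gf σ k * Complex.exp (2 * Real.pi * I * w) ^ k =
    jacobiTheta₂_term k (w + 1 / 2 - σ / 2) σ := by
  rw [← Complex.exp_int_mul, gf, ← Complex.exp_add, jacobiTheta₂_term]
  congr 1
  ring

lemma norm_p_lt {σ : ℂ} (hσ : 0 < σ.im) : ‖Complex.exp (2 * Real.pi * I * σ)‖ < 1 := by
  simpa using UpperHalfPlane.norm_exp_two_pi_I_lt_one ⟨σ, hσ⟩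

lemma theta_series {σ : ℂ} (hσ : 0 < σ.im) : ∃ C : ℂ, ∀ w : ℂ,
    Theta (Complex.exp (2 * Real.pi * I * σ)) (Complex.exp (2 * Real.pi * I * w)) =
      C * ∑' k : ℤ, gf σ k * Complex.exp (2 * Real.pi * I * w) ^ k := by
  obtain ⟨p, hs⟩ : ∃ p, p = Complex.exp (2 * Real.pi * I * σ) := ⟨_, rfl⟩
  have hp : ‖p‖ < 1 := hs ▸ norm_p_lt hσ
  obtain ⟨q, hq, hQ⟩ := Qf_tendsto hp
  obtain ⟨ρ, hR⟩ := Rf_tendsto hp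
  obtain ⟨M, hM0, hM⟩ := Qf_bdd hp
  obtain ⟨N, hN0, hN⟩ := Rf_bdd hp
  refine ⟨q * ρ * ρ * q, fun w => ?_⟩
  have hsum : Summable fun k : ℤ => gf σ k * Complex.exp (2 * Real.pi * I * w) ^ k := by
    simp_rw [gf_term]
    exact (summable_jacobiTheta₂_term_iff _ _).mpr hσ
  obtain ⟨z, hzw⟩ : ∃ z, z = Complex.exp (2 * Real.pi * I * w) := ⟨_, rfl⟩
  have hz : z ≠ 0 := hzw ▸ Complex.exp_ne_zero _
  rw [← hs, ← hzw]
  rw [← hzw] at hsum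
  have t1 : Filter.Tendsto (fun n : ℕ => ∑' k : ℤ, cf σ p n k * z ^ k) Filter.atTop
      (nhds (∑' k : ℤ, (q * ρ * ρ) * (gf σ k * z ^ k))) := by
    refine tendsto_tsum_of_dominated_convergence
      (bound := fun k => M * N * N * ‖gf σ k * z ^ k‖) (hsum.norm.mul_left _) ?_ ?_
    · intro k
      have e1 : Filter.Tendsto (fun n : ℕ => Qf p (2 * n)) Filter.atTop (nhds q) :=
        hQ.comp (Filter.tendsto_atTop_mono (fun n => by simp only [id]; omega) Filter.tendsto_id)
      have e2 : Filter.Tendsto (fun n : ℕ => Rf p (n + k)) Filter.atTop (nhds ρ) :=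
        hR.comp (Filter.tendsto_atTop_add_const_right _ _ tendsto_natCast_atTop_atTop)
      have e3 : Filter.Tendsto (fun n : ℕ => Rf p (n - k)) Filter.atTop (nhds ρ) := by
        have := hR.comp (Filter.tendsto_atTop_add_const_right _ (-k)
          (tendsto_natCast_atTop_atTop (R := ℤ)))
        simpa only [Function.comp_def, ← sub_eq_add_neg] using this
      refine (((e1.mul e2).mul e3).mul_const (gf σ k * z ^ k)).congr fun n => ?_
      simp only [cf]; ring
    · filter_upwards with n k
      have : cf σ p n k * z ^ k = Qf p (2 * n) * Rf p (n + k) * Rf p (n - k) * (gf σ k * z ^ k) := by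
        simp only [cf]; ring
      rw [this, norm_mul, norm_mul, norm_mul]
      gcongr
      · exact hM _
      · exact hN _
      · exact hN _
  have t2 : Filter.Tendsto (fun n : ℕ => ∏ j ∈ Finset.range n,
      ((1 - z * p ^ j) * (1 - p ^ (j + 1) / z) * (1 - p ^ (j + 1)))) Filter.atTop
      (nhds (Theta p z)) := by
    refine Multipliable.tendsto_prod_tprod_nat ?_
    have sg : Summable fun j : ℕ => ‖p‖ ^ j := summable_geometric_of_lt_one (norm_nonneg _) hp
    have m1 : Multipliable fun j : ℕ => 1 - z * p ^ j := by
      have := multipliable_one_add_of_summable (f := fun j : ℕ => -(z * p ^ j))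
        (by simpa using sg.mul_left ‖z‖)
      simpa [← sub_eq_add_neg] using this
    have m2 : Multipliable fun j : ℕ => 1 - p ^ (j + 1) / z := by
      have := multipliable_one_add_of_summable (f := fun j : ℕ => -(p ^ (j + 1) / z))
        (by simpa using ((summable_nat_add_iff 1).mpr sg).div_const ‖z‖)
      simpa [← sub_eq_add_neg] using this
    exact (m1.mul m2).mul (ModularForm.multipliable_one_sub_pow hp)
  have t3 := (t1.mul hQ)
  refine tendsto_nhds_unique t2 ?_
  rw [tsum_mul_left] at t3
  convert t3 using 2 with n
  · rw [(hasSum_finite hs hp hz n).tsum_eq, Finset.prod_mul_distrib, Qf]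
  · ring

/-- Gaussian term. -/
def Ef (σ y : ℂ) : ℂ := Complex.exp (2 * Real.pi * I * σ * y ^ 2)

lemma Ef_summable {σ : ℂ} (hσ : 0 < σ.im) (y : ℂ) : Summable fun i : ℤ => Ef σ (i + y) := by
  have h := (summable_jacobiTheta₂_term_iff (2 * σ * y) (2 * σ)).mpr (by simpa using hσ)
  refine (h.mul_left (Complex.exp (2 * Real.pi * I * σ * y ^ 2))).congr fun i => ?_
  rw [Ef, jacobiTheta₂_term, ← Complex.exp_add]
  congr 1
  ring

/-- Bracket term. -/
def Bf (σ y : ℂ) (k : ℤ) : ℂ :=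
  Complex.exp (Real.pi * I * (k + σ * (k + y - 1 / 2) ^ 2))

lemma Bf_eq (σ y : ℂ) (k : ℤ) : Bf σ y k = Complex.exp (Real.pi * I * σ * (y ^ 2 - y + 1 / 4)) *
    (gf σ k * Complex.exp (2 * Real.pi * I * (σ * y)) ^ k) := by
  rw [← Complex.exp_int_mul, gf, ← Complex.exp_add, ← Complex.exp_add, Bf]
  congr 1
  ring

lemma Bf_summable {σ : ℂ} (hσ : 0 < σ.im) (y : ℂ) : Summable (Bf σ y) := by
  have h := (summable_jacobiTheta₂_term_iff (σ * y + 1 / 2 - σ / 2) σ).mpr hσ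
  refine (h.mul_left (Complex.exp (Real.pi * I * σ * (y ^ 2 - y + 1 / 4)))).congr fun k => ?_
  rw [Bf_eq, gf_term]

lemma Bf_even (σ a b : ℂ) (i j : ℤ) : Bf σ (a + b) (i + j + 1) * Bf σ (a - b) (i - j + 1) =
    Ef σ (i + (1 / 2 + a)) * Ef σ (j + b) := by
  simp only [Bf, Ef]
  rw [← Complex.exp_add, ← Complex.exp_add, Complex.exp_eq_exp_iff_exists_int]
  refine ⟨i + 1, ?_⟩
  push_cast
  ring

lemma Bf_odd (σ a b : ℂ) (i j : ℤ) : Bf σ (a + b) (i + j + 1) * Bf σ (a - b) (i - j) =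
    -(Ef σ (i + a) * Ef σ (j + (1 / 2 + b))) := by
  simp only [Bf, Ef]
  rw [← Complex.exp_add, ← Complex.exp_add, ← neg_one_mul, ← Complex.exp_pi_mul_I,
    ← Complex.exp_add, Complex.exp_eq_exp_iff_exists_int]
  refine ⟨i, ?_⟩
  push_cast
  ring

lemma hasSum_split {f : ℤ × ℤ → ℂ} {A B : ℂ}
    (h1 : HasSum (fun x : ℤ × ℤ => f (x.1 + x.2 + 1, x.1 - x.2 + 1)) A)
    (h2 : HasSum (fun x : ℤ × ℤ => f (x.1 + x.2 + 1, x.1 - x.2)) B) : HasSum f (A + B) := by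
  let φ : ℤ × ℤ → ℤ × ℤ := fun x => (x.1 + x.2 + 1, x.1 - x.2 + 1)
  let ψ : ℤ × ℤ → ℤ × ℤ := fun x => (x.1 + x.2 + 1, x.1 - x.2)
  have hφ : Function.Injective φ := by
    rintro ⟨x, y⟩ ⟨x', y'⟩ h
    simp only [φ, Prod.mk.injEq] at h ⊢
    omega
  have hψ : Function.Injective ψ := by
    rintro ⟨x, y⟩ ⟨x', y'⟩ h
    simp only [ψ, Prod.mk.injEq] at h ⊢
    omega
  have hc : IsCompl (Set.range φ) (Set.range ψ) := by
    rw [isCompl_iff, Set.disjoint_iff_forall_ne, codisjoint_iff]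
    constructor
    · rintro _ ⟨⟨x, y⟩, rfl⟩ _ ⟨⟨x', y'⟩, rfl⟩ h
      simp only [φ, ψ, Prod.mk.injEq] at h
      omega
    · refine Set.eq_univ_iff_forall.mpr ?_
      rintro ⟨k, l⟩
      rcases Int.even_or_odd' (k + l) with ⟨c, h | h⟩
      · exact Or.inl ⟨(c - 1, k - c), by simp only [φ, Prod.mk.injEq]; omega⟩
      · exact Or.inr ⟨(c, k - c - 1), by simp only [ψ, Prod.mk.injEq]; omega⟩
  exact HasSum.add_isCompl hc (hφ.hasSum_range_iff.mpr h1) (hψ.hasSum_range_iff.mpr h2)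

lemma Bf_prod {σ : ℂ} (hσ : 0 < σ.im) (a b : ℂ) :
    (∑' k, Bf σ (a + b) k) * (∑' k, Bf σ (a - b) k) =
      (∑' i : ℤ, Ef σ (i + (1 / 2 + a))) * (∑' i : ℤ, Ef σ (i + b)) -
      (∑' i : ℤ, Ef σ (i + a)) * (∑' i : ℤ, Ef σ (i + (1 / 2 + b))) := by
  have B1 := (Bf_summable hσ (a + b)).norm
  have B2 := (Bf_summable hσ (a - b)).norm
  have E1 := (Ef_summable hσ (1 / 2 + a)).norm
  have E2 := (Ef_summable hσ b).norm
  have E3 := (Ef_summable hσ a).norm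
  have E4 := (Ef_summable hσ (1 / 2 + b)).norm
  rw [tsum_mul_tsum_of_summable_norm B1 B2, tsum_mul_tsum_of_summable_norm E1 E2,
    tsum_mul_tsum_of_summable_norm E3 E4]
  have S1 := (summable_mul_of_summable_norm E1 E2).hasSum
  have S2 := (summable_mul_of_summable_norm E3 E4).hasSum.neg
  rw [sub_eq_add_neg (∑' _ : ℤ × ℤ, _)]
  refine HasSum.tsum_eq (hasSum_split ?_ ?_)
  · simp only [Bf_even]
    exact S1
  · simp only [Bf_odd]
    exact S2

lemma br_series (τ : ℂ) (r : ℝ) (hτ : 0 < τ.im) (hr : 0 < r) : ∃ σ C : ℂ, 0 < σ.im ∧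
    ∀ u, br τ r u = C * ∑' k, Bf σ (u / r) k := by
  have hτ0 : τ ≠ 0 := by rintro rfl; simp at hτ
  have hr0 : (r : ℂ) ≠ 0 := by exact_mod_cast hr.ne'
  have hσ : 0 < (-1 / τ).im := by
    have := Complex.normSq_pos.mpr hτ0
    simp only [Complex.div_im]
    simp
    have := div_pos hτ this
    rw [neg_div]
    linarith
  obtain ⟨C, hC⟩ := theta_series hσ
  refine ⟨-1 / τ, C * Complex.exp (-(Real.pi * I * (-1 / τ) * (1 / 4))), hσ, fun u => ?_⟩
  have e1 : xp τ r (2 * r) = Complex.exp (2 * Real.pi * I * (-1 / τ)) := by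
    rw [xp]; congr 1; field_simp
  have e2 : xp τ r (2 * u) = Complex.exp (2 * Real.pi * I * (-1 / τ * (u / r))) := by
    rw [xp]; congr 1; field_simp
  simp_rw [Bf_eq]
  rw [br, e1, e2, hC, tsum_mul_left]
  have e3 : xp τ r (u ^ 2 / r - u) = Complex.exp (-(Real.pi * I * (-1 / τ) * (1 / 4))) *
      Complex.exp (Real.pi * I * (-1 / τ) * ((u / r) ^ 2 - u / r + 1 / 4)) := by
    rw [← Complex.exp_add, xp]; congr 1; field_simp; ring
  rw [e3]
  ring

lemma br_prod (τ : ℂ) (r : ℝ) (hτ : 0 < τ.im) (hr : 0 < r) : ∃ (K : ℂ) (A B : ℂ → ℂ),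
    ∀ u v, br τ r (u + v) * br τ r (u - v) = K * (A u * B v - B u * A v) := by
  obtain ⟨σ, C, hσ, h⟩ := br_series τ r hτ hr
  refine ⟨C * C, fun u => ∑' i : ℤ, Ef σ (i + (1 / 2 + u / r)), fun u => ∑' i : ℤ, Ef σ (i + u / r),
    fun u v => ?_⟩
  rw [← Bf_prod hσ, h, h, add_div, sub_div]
  ring

/-- Three-term theta function identity. -/
theorem three_term_identity (τ : ℂ) (r : ℝ) (hτ : 0 < τ.im) (hr : 0 < r) (s t u v : ℂ) :
    br τ r (s + t) * br τ r (s - t) * br τ r (u + v) * br τ r (u - v) =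
      br τ r (u + s) * br τ r (u - s) * br τ r (v + t) * br τ r (v - t) -
        br τ r (u + t) * br τ r (u - t) * br τ r (v + s) * br τ r (v - s) := by
  obtain ⟨K, A, B, h⟩ := br_prod τ r hτ hr
  rw [mul_assoc, mul_assoc (br τ r (u + s) * _), mul_assoc (br τ r (u + t) * _), h, h, h, h, h, h]
  ring

end Ell
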